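/- Let C be a non-degenerate coalgebra over a field K, let Q : C → C be a left C-colinear map (Δ∘Q = (id⊗Q)∘Δ) and let T : C → C be a right C-colinear map (Δ∘T = (T⊗id)∘Δ). Then (C, Q, T) is a Rota-Baxter cosystem if and only if T∘Q = 0 and Q∘T = 0. -/

import Mathlib

open TensorProduct

noncomputable section

variable {K : Type*} [Field K] {C : Type*} [AddCommGroup C] [Module K C]

/-- Coassociativity of a comultiplication (no counit assumed). -/
def Coassoc (Δ : C →ₗ[K] C ⊗[K] C) : Prop :=
  ∀ c : C, (TensorProduct.assoc K C C C) (TensorProduct.map Δ LinearMap.id (Δ c)) =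
    TensorProduct.map LinearMap.id Δ (Δ c)

/-- Rota-Baxter cosystem conditions. -/
def IsRBCosystem (Δ : C →ₗ[K] C ⊗[K] C) (Q T : C →ₗ[K] C) : Prop :=
  (∀ c : C, TensorProduct.map Q Q (Δ c) =
      TensorProduct.map Q LinearMap.id (Δ (Q c)) +
      TensorProduct.map LinearMap.id T (Δ (Q c))) ∧
  (∀ c : C, TensorProduct.map T T (Δ c) =
      TensorProduct.map Q LinearMap.id (Δ (T c)) +
      TensorProduct.map LinearMap.id T (Δ (T c)))

/-- Non-degeneracy of a coalgebra. -/
def Nondegenerate (Δ : C →ₗ[K] C ⊗[K] C) : Prop :=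
  ∀ f : C →ₗ[K] C,
    ((∀ c : C, TensorProduct.map LinearMap.id f (Δ c) = 0) ∨
     (∀ c : C, TensorProduct.map f LinearMap.id (Δ c) = 0)) → f = 0

/-- `pairApply f g (x ⊗ y) = f x * g y`. -/
def pairApply (f g : C →ₗ[K] K) : C ⊗[K] C →ₗ[K] K :=
  TensorProduct.lift ((LinearMap.mul K K).compl₁₂ f g)

/-- Coassociative Yang–Baxter pair. -/
def IsCYBP (Δ : C →ₗ[K] C ⊗[K] C) (σ τ : C →ₗ[K] C →ₗ[K] K) : Prop :=
  (∀ c d e : C, pairApply (σ.flip e) (σ.flip d) (Δ c)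
      - pairApply (σ c) (σ.flip e) (Δ d) + pairApply (τ d) (σ c) (Δ e) = 0) ∧
  (∀ c d e : C, pairApply (τ.flip e) (σ.flip d) (Δ c)
      - pairApply (τ c) (τ.flip e) (Δ d) + pairApply (τ d) (τ c) (Δ e) = 0)

/-- Swap of the first two tensor factors of `C ⊗ (C ⊗ C)`. -/
def swapFirstTwo : C ⊗[K] (C ⊗[K] C) →ₗ[K] C ⊗[K] (C ⊗[K] C) :=
  (TensorProduct.assoc K C C C).toLinearMap ∘ₗ
    LinearMap.rTensor C (TensorProduct.comm K C C).toLinearMap ∘ₗ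
    (TensorProduct.assoc K C C C).symm.toLinearMap

/-- `contract13 σ (x ⊗ (y ⊗ z)) = σ x z • y`. -/
def contract13 (σ : C →ₗ[K] C →ₗ[K] K) : C ⊗[K] (C ⊗[K] C) →ₗ[K] C :=
  (TensorProduct.rid K C).toLinearMap ∘ₗ
    LinearMap.lTensor C (TensorProduct.lift σ) ∘ₗ swapFirstTwo

/-- `muForm Δ σ τ (c ⊗ d) = σ(c₂,d) • c₁ − τ(c,d₁) • d₂`. -/
def muForm (Δ : C →ₗ[K] C ⊗[K] C) (σ τ : C →ₗ[K] C →ₗ[K] K) :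
    C ⊗[K] C →ₗ[K] C :=
  ((TensorProduct.rid K C).toLinearMap ∘ₗ
      LinearMap.lTensor C (TensorProduct.lift σ) ∘ₗ
      (TensorProduct.assoc K C C C).toLinearMap ∘ₗ LinearMap.rTensor C Δ)
  - ((TensorProduct.lid K C).toLinearMap ∘ₗ
      LinearMap.rTensor C (TensorProduct.lift τ) ∘ₗ
      (TensorProduct.assoc K C C C).symm.toLinearMap ∘ₗ LinearMap.lTensor C Δ)

/-- Coderivation condition for a multiplication-like map on a coalgebra. -/
def IsCoderivation (Δ : C →ₗ[K] C ⊗[K] C) (δ : C ⊗[K] C →ₗ[K] C) : Prop :=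
  ∀ c d : C, Δ (δ (c ⊗ₜ d)) =
    LinearMap.lTensor C (δ ∘ₗ (TensorProduct.mk K C C).flip d) (Δ c) +
    LinearMap.rTensor C (δ ∘ₗ TensorProduct.mk K C C c) (Δ d)

/-- Covariant coderivation with respect to `(δ₁, δ₂)`. -/
def IsCovariant (Δ : C →ₗ[K] C ⊗[K] C) (δ₁ δ₂ μ : C ⊗[K] C →ₗ[K] C) : Prop :=
  (∀ c d : C, Δ (μ (c ⊗ₜ d)) =
      LinearMap.rTensor C (μ ∘ₗ TensorProduct.mk K C C c) (Δ d) +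
      LinearMap.lTensor C (δ₁ ∘ₗ (TensorProduct.mk K C C).flip d) (Δ c)) ∧
  (∀ c d : C, Δ (μ (c ⊗ₜ d)) =
      LinearMap.lTensor C (μ ∘ₗ (TensorProduct.mk K C C).flip d) (Δ c) +
      LinearMap.rTensor C (δ₂ ∘ₗ TensorProduct.mk K C C c) (Δ d))

/-- Associativity of a multiplication `μ : C ⊗ C →ₗ C`. -/
def IsAssocMul (μ : C ⊗[K] C →ₗ[K] C) : Prop :=
  ∀ c d e : C, μ (μ (c ⊗ₜ d) ⊗ₜ e) = μ (c ⊗ₜ μ (d ⊗ₜ e))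

/-- Counit condition. -/
def IsCounit (Δ : C →ₗ[K] C ⊗[K] C) (ε : C →ₗ[K] K) : Prop :=
  ∀ c : C, (TensorProduct.lid K C) (TensorProduct.map ε LinearMap.id (Δ c)) = c ∧
    (TensorProduct.rid K C) (TensorProduct.map LinearMap.id ε (Δ c)) = c

/-- Dendriform coalgebra conditions for `(Δr, Δl) = (Δ_≻, Δ_≺)`. -/
def IsDendriformCoalgebra (Δr Δl : C →ₗ[K] C ⊗[K] C) : Prop :=
  (∀ c : C, (TensorProduct.assoc K C C C) (TensorProduct.map Δr LinearMap.id (Δr c)) =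
      TensorProduct.map LinearMap.id Δr (Δr c) + TensorProduct.map LinearMap.id Δl (Δr c)) ∧
  (∀ c : C, (TensorProduct.assoc K C C C) (TensorProduct.map Δl LinearMap.id (Δr c)) =
      TensorProduct.map LinearMap.id Δr (Δl c)) ∧
  (∀ c : C, (TensorProduct.assoc K C C C) (TensorProduct.map Δr LinearMap.id (Δl c)) +
      (TensorProduct.assoc K C C C) (TensorProduct.map Δl LinearMap.id (Δl c)) =
      TensorProduct.map LinearMap.id Δl (Δl c))

/-- The conditions on the bilinear form `u` in Theorem 4.11. -/
def UCond (Δ : C →ₗ[K] C ⊗[K] C) (δ₁ δ₂ : C ⊗[K] C →ₗ[K] C)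
    (u : C →ₗ[K] C →ₗ[K] K) : Prop :=
  (∀ c d : C, δ₁ (c ⊗ₜ d) - δ₂ (c ⊗ₜ d) =
      (TensorProduct.rid K C) (LinearMap.lTensor C (u.flip d) (Δ c)) -
      (TensorProduct.lid K C) (LinearMap.rTensor C (u c) (Δ d))) ∧
  (∀ c d e : C, δ₁ (δ₁ (c ⊗ₜ d) ⊗ₜ e) - δ₁ (c ⊗ₜ δ₁ (d ⊗ₜ e)) =
      (TensorProduct.lid K C)
        (TensorProduct.map (u d) (δ₁ ∘ₗ TensorProduct.mk K C C c) (Δ e))) ∧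
  (∀ c d e : C, u (δ₁ (c ⊗ₜ d)) e - u c (δ₁ (d ⊗ₜ e)) =
      pairApply (u d) (u c) (Δ e) - pairApply (u c) (u.flip e) (Δ d))

/-! Colinearity turns the first Rota-Baxter equation into
`Q c₁ ⊗ Q c₂ = Q c₁ ⊗ Q c₂ + c₁ ⊗ T (Q c₂)` and the second one into
`T c₁ ⊗ T c₂ = Q (T c₁) ⊗ c₂ + T c₁ ⊗ T c₂`. After cancellation they say that `T ∘ Q` and `Q ∘ T`
are killed by tensoring with the identity along `Δ`, which non-degeneracy translates into
`T ∘ Q = 0` and `Q ∘ T = 0`. -/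

section Colinear

variable {R A M N : Type*} [CommSemiring R]

section AddCommMonoid

variable [AddCommMonoid A] [Module R A] [AddCommMonoid M] [Module R M]
  [AddCommMonoid N] [Module R N]

/-- Left colinearity `Δ ∘ Q = (id ⊗ Q) ∘ Δ`, that is, `Q` is an endomorphism of `A` as a left
comodule over itself, for an arbitrary comultiplication `Δ`. -/
def IsLeftColinear (Δ : A →ₗ[R] A ⊗[R] A) (Q : A →ₗ[R] A) : Prop :=
  ∀ a : A, Δ (Q a) = TensorProduct.map LinearMap.id Q (Δ a)

/-- Right colinearity `Δ ∘ T = (T ⊗ id) ∘ Δ`, that is, `T` is an endomorphism of `A` as a right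
comodule over itself, for an arbitrary comultiplication `Δ`. -/
def IsRightColinear (Δ : A →ₗ[R] A ⊗[R] A) (T : A →ₗ[R] A) : Prop :=
  ∀ a : A, Δ (T a) = TensorProduct.map T LinearMap.id (Δ a)

variable {Δ : A →ₗ[R] A ⊗[R] A} {Q T : A →ₗ[R] A}

theorem IsLeftColinear.map_comul_apply (hQ : IsLeftColinear Δ Q)
    (f : A →ₗ[R] M) (g : A →ₗ[R] N) (a : A) :
    TensorProduct.map f g (Δ (Q a)) = TensorProduct.map f (g ∘ₗ Q) (Δ a) := by
  rw [hQ a, TensorProduct.map_map, LinearMap.comp_id]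

theorem IsRightColinear.map_comul_apply (hT : IsRightColinear Δ T)
    (f : A →ₗ[R] M) (g : A →ₗ[R] N) (a : A) :
    TensorProduct.map f g (Δ (T a)) = TensorProduct.map (f ∘ₗ T) g (Δ a) := by
  rw [hT a, TensorProduct.map_map, LinearMap.comp_id]

end AddCommMonoid

variable [AddCommGroup A] [Module R A] {Δ : A →ₗ[R] A ⊗[R] A}

theorem IsLeftColinear.map_comul_eq_add_iff {Q : A →ₗ[R] A} (hQ : IsLeftColinear Δ Q)
    (P T : A →ₗ[R] A) (a : A) :
    TensorProduct.map P Q (Δ a) =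
        TensorProduct.map P LinearMap.id (Δ (Q a)) + TensorProduct.map LinearMap.id T (Δ (Q a)) ↔
      TensorProduct.map LinearMap.id (T ∘ₗ Q) (Δ a) = 0 := by
  rw [hQ.map_comul_apply, hQ.map_comul_apply, LinearMap.id_comp, left_eq_add]

theorem IsRightColinear.map_comul_eq_add_iff {T : A →ₗ[R] A} (hT : IsRightColinear Δ T)
    (Q P : A →ₗ[R] A) (a : A) :
    TensorProduct.map T P (Δ a) =
        TensorProduct.map Q LinearMap.id (Δ (T a)) + TensorProduct.map LinearMap.id P (Δ (T a)) ↔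
      TensorProduct.map (Q ∘ₗ T) LinearMap.id (Δ a) = 0 := by
  rw [hT.map_comul_apply, hT.map_comul_apply, LinearMap.id_comp, right_eq_add]

end Colinear

theorem Nondegenerate.forall_map_id_left_eq_zero_iff {Δ : C →ₗ[K] C ⊗[K] C}
    (hnd : Nondegenerate Δ) {f : C →ₗ[K] C} :
    (∀ c : C, TensorProduct.map LinearMap.id f (Δ c) = 0) ↔ f = 0 := by
  refine ⟨fun h => hnd f (Or.inl h), ?_⟩
  rintro rfl c
  rw [TensorProduct.map_zero_right, LinearMap.zero_apply]

theorem Nondegenerate.forall_map_id_right_eq_zero_iff {Δ : C →ₗ[K] C ⊗[K] C}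
    (hnd : Nondegenerate Δ) {f : C →ₗ[K] C} :
    (∀ c : C, TensorProduct.map f LinearMap.id (Δ c) = 0) ↔ f = 0 := by
  refine ⟨fun h => hnd f (Or.inr h), ?_⟩
  rintro rfl c
  rw [TensorProduct.map_zero_left, LinearMap.zero_apply]

theorem cosystem_iff_orthogonality_general {Δ : C →ₗ[K] C ⊗[K] C} (hnd : Nondegenerate Δ)
    {Q T : C →ₗ[K] C} (hQ : IsLeftColinear Δ Q) (hT : IsRightColinear Δ T) :
    IsRBCosystem Δ Q T ↔ (T ∘ₗ Q = 0 ∧ Q ∘ₗ T = 0) := by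
  simp only [IsRBCosystem, hQ.map_comul_eq_add_iff, hT.map_comul_eq_add_iff,
    hnd.forall_map_id_left_eq_zero_iff, hnd.forall_map_id_right_eq_zero_iff]

/-- On a non-degenerate coalgebra, with `Q` left colinear and `T`
right colinear, `(C, Q, T)` is a Rota-Baxter cosystem iff `T∘Q = 0` and `Q∘T = 0`. -/
theorem cosystem_iff_orthogonality
    (Δ : C →ₗ[K] C ⊗[K] C) (hΔ : Coassoc Δ) (hnd : Nondegenerate Δ)
    (Q T : C →ₗ[K] C)
    (hQ : ∀ c : C, Δ (Q c) = TensorProduct.map LinearMap.id Q (Δ c))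
    (hT : ∀ c : C, Δ (T c) = TensorProduct.map T LinearMap.id (Δ c)) :
    IsRBCosystem Δ Q T ↔ (T ∘ₗ Q = 0 ∧ Q ∘ₗ T = 0) :=
  cosystem_iff_orthogonality_general hnd hQ hT

end
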